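/- arXiv:0910.5430 — 3 statements merged into one kernel-verified Lean document; each statement's English description precedes it below -/
import Mathlib

section
/- Let x₀ ∈ ℝ^m, N ∈ ℕ, and let c_1, …, c_m ∈ λ_N be pairwise commuting elements of the Grassmann algebra with ε(c_i) = (x₀)_i for all i. Then there exists exactly one ℝ-algebra homomorphism a : C^∞_{x₀} → λ_N from the ring of germs at x₀ of smooth real-valued functions to λ_N such that a sends the germ of the i-th coordinate function y ↦ y_i to c_i for every i = 1, …, m. -/
/-!
Subtracting `x₀ i` from the coordinate functions and from the `c i`, we may assume that the targets
are nilpotent: an element of the exterior algebra without component in degree `0` is. Any algebra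
homomorphism with such values kills a power of the maximal ideal `𝔪` of `C^∞_{x₀}`. By Hadamard's
lemma every germ is, modulo `𝔪 ^ K`, a polynomial in the centred coordinates, so the homomorphism
is determined. Conversely that polynomial is unique modulo degree `K`: a germ in `𝔪 ^ (d + 1)` is
`O(‖y - x₀‖ ^ (d + 1))`, which, along a line through `x₀`, no nonzero form of degree `d` can be.
Hence the values prescribed on polynomials descend to `C^∞_{x₀} / 𝔪 ^ K`.
-/

open Filter Topology

/-- The canonical `ℝ`-algebra structure on the ring of germs of `A`-valued functions,
where `A` is an `ℝ`-algebra. -/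
noncomputable instance Filter.Germ.instAlgebraReal {α : Type*} (l : Filter α) (A : Type*)
    [Semiring A] [Algebra ℝ A] : Algebra ℝ (Filter.Germ l A) :=
  Algebra.ofModule
    (fun r x y => x.inductionOn fun f => y.inductionOn fun g => by
      rw [← Filter.Germ.coe_smul, ← Filter.Germ.coe_mul, ← Filter.Germ.coe_mul,
        ← Filter.Germ.coe_smul]
      exact congrArg _ (funext fun z => smul_mul_assoc r (f z) (g z)))
    (fun r x y => x.inductionOn fun f => y.inductionOn fun g => by
      rw [← Filter.Germ.coe_smul, ← Filter.Germ.coe_mul, ← Filter.Germ.coe_mul,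
        ← Filter.Germ.coe_smul]
      exact congrArg _ (funext fun z => mul_smul_comm r (f z) (g z)))

/-- `C^∞_x`: the `ℝ`-algebra of germs at `x` of smooth (`C^∞`) real-valued functions
defined on open neighbourhoods of `x` in `ℝ^n`. -/
noncomputable def SmoothGermAt (n : ℕ) (x : Fin n → ℝ) :
    Subalgebra ℝ (Filter.Germ (𝓝 x) ℝ) where
  carrier := {φ | ∃ f : (Fin n → ℝ) → ℝ,
    (∃ U : Set (Fin n → ℝ), IsOpen U ∧ x ∈ U ∧ ContDiffOn ℝ (⊤ : ℕ∞) f U) ∧ φ = ↑f}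
  mul_mem' := by
    rintro φ ψ ⟨f, ⟨U, hU, hxU, hf⟩, rfl⟩ ⟨g, ⟨V, hV, hxV, hg⟩, rfl⟩
    exact ⟨f * g, ⟨U ∩ V, hU.inter hV, ⟨hxU, hxV⟩,
      (hf.mono Set.inter_subset_left).mul (hg.mono Set.inter_subset_right)⟩,
      (Filter.Germ.coe_mul f g).symm ▸ rfl⟩
  add_mem' := by
    rintro φ ψ ⟨f, ⟨U, hU, hxU, hf⟩, rfl⟩ ⟨g, ⟨V, hV, hxV, hg⟩, rfl⟩
    exact ⟨f + g, ⟨U ∩ V, hU.inter hV, ⟨hxU, hxV⟩,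
      (hf.mono Set.inter_subset_left).add (hg.mono Set.inter_subset_right)⟩,
      (Filter.Germ.coe_add f g).symm ▸ rfl⟩
  algebraMap_mem' := by
    intro c
    refine ⟨fun _ => c, ⟨Set.univ, isOpen_univ, trivial, contDiffOn_const⟩, ?_⟩
    show c • (1 : Filter.Germ (𝓝 x) ℝ) = _
    rw [show (1 : Filter.Germ (𝓝 x) ℝ) = ((fun _ => (1:ℝ)) : (Fin n → ℝ) → ℝ) from rfl,
      ← Filter.Germ.coe_smul]
    exact congrArg _ (funext fun z => by simp [smul_eq_mul])

/-- Evaluation of a smooth germ at its base point, as a ring homomorphism. -/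
noncomputable def SmoothGermAt.evalHom (n : ℕ) (x : Fin n → ℝ) :
    SmoothGermAt n x →+* ℝ :=
  (Filter.Germ.valueRingHom).comp (Subalgebra.val _).toRingHom

/-- The maximal ideal `m_x` of germs vanishing at `x`. -/
noncomputable def SmoothGermAt.mIdeal (n : ℕ) (x : Fin n → ℝ) :
    Ideal (SmoothGermAt n x) :=
  RingHom.ker (SmoothGermAt.evalHom n x)

/-- The germ at `x₀` of the `i`-th coordinate function `y ↦ y i`, as an element of `C^∞_{x₀}`. -/
noncomputable def coordFunGermAt (m : ℕ) (x₀ : Fin m → ℝ) (i : Fin m) : SmoothGermAt m x₀ :=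
  ⟨(↑(fun y : Fin m → ℝ => y i) : Filter.Germ (𝓝 x₀) ℝ),
    ⟨fun y => y i, ⟨Set.univ, isOpen_univ, trivial,
      (ContinuousLinearMap.proj (R := ℝ) (φ := fun _ : Fin m => ℝ) i).contDiff.contDiffOn⟩,
      rfl⟩⟩

section ExteriorAlgebra

theorem isNilpotent_of_decompose_zero_eq_zero {A σ : Type*} [Semiring A] [SetLike σ A]
    [AddSubmonoidClass σ A] (𝒜 : ℕ → σ) [GradedRing 𝒜] {n : ℕ} (hn : ∀ i ≥ n, ∀ a ∈ 𝒜 i, a = 0)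
    {a : A} (ha : DirectSum.decompose 𝒜 a 0 = 0) : IsNilpotent a := by
  refine ⟨n, (DirectSum.decompose 𝒜).injective ?_⟩
  ext i
  rw [DirectSum.decompose_zero, DirectSum.zero_apply, ZeroMemClass.coe_zero]
  obtain hi | hi := lt_or_ge i n
  · have hlow : ∀ b ∈ List.replicate n (DirectSum.decompose 𝒜 a), ∀ k < 1, b k = 0 := by
      rintro b hb k hk
      rw [List.eq_of_mem_replicate hb, Nat.lt_one_iff.1 hk, ha]
    have hpow : DirectSum.decompose 𝒜 (a ^ n) = DirectSum.decompose 𝒜 a ^ n :=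
      map_pow (DirectSum.decomposeRingEquiv 𝒜) a n
    rw [hpow, ← List.prod_replicate, listProd_apply_eq_zero hlow (by simpa using hi),
      ZeroMemClass.coe_zero]
  · exact hn i hi _ (SetLike.coe_mem _)

variable {R M : Type*} [CommRing R] [AddCommGroup M] [Module R M]

theorem exteriorPower_eq_bot_of_finrank_lt [Nontrivial R] [Module.Free R M] [Module.Finite R M]
    {n : ℕ} (hn : Module.finrank R M < n) : ⋀[R]^n M = ⊥ := by
  have hrank : Module.finrank R (⋀[R]^n M) = 0 := by
    rw [exteriorPower.finrank_eq, Nat.choose_eq_zero_of_lt hn]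
  exact Submodule.subsingleton_iff_eq_bot.1 ((Module.finrank_eq_zero_iff_of_free R _).1 hrank)

theorem algebraMap_algebraMapInv_eq_decompose_zero (z : ExteriorAlgebra R M) :
    algebraMap R (ExteriorAlgebra R M) (ExteriorAlgebra.algebraMapInv z) =
      (DirectSum.decompose (fun i : ℕ ↦ ⋀[R]^i M) z 0 : ExteriorAlgebra R M) := by
  rw [← GradedRing.projZeroRingHom_apply]
  induction z using ExteriorAlgebra.induction with
  | algebraMap r =>
    rw [AlgHom.commutes, Algebra.algebraMap_self_apply, GradedRing.projZeroRingHom_apply,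
      DirectSum.decompose_of_mem_same _ (SetLike.algebraMap_mem_graded _ r)]
  | ι v =>
    have hv : ExteriorAlgebra.ι R v ∈ ⋀[R]^1 M := by simp
    rw [GradedRing.projZeroRingHom_apply,
      DirectSum.decompose_of_mem_ne (fun i : ℕ ↦ ⋀[R]^i M) hv one_ne_zero]
    simp [ExteriorAlgebra.algebraMapInv]
  | mul a b ha hb => simp only [map_mul, ha, hb]
  | add a b ha hb => simp only [map_add, ha, hb]

theorem isNilpotent_of_algebraMapInv_eq_zero [Nontrivial R] [Module.Free R M] [Module.Finite R M]
    {z : ExteriorAlgebra R M} (hz : ExteriorAlgebra.algebraMapInv z = 0) : IsNilpotent z := by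
  refine isNilpotent_of_decompose_zero_eq_zero (fun i : ℕ ↦ ⋀[R]^i M)
    (n := Module.finrank R M + 1) (fun i hi a ha ↦ ?_) (Subtype.ext ?_)
  · rwa [exteriorPower_eq_bot_of_finrank_lt hi, Submodule.mem_bot] at ha
  · rw [← algebraMap_algebraMapInv_eq_decompose_zero, hz, map_zero, ZeroMemClass.coe_zero]

end ExteriorAlgebra

section FormalCoordinates

open MvPolynomial

/-- The elements `s i` of the `R`-algebra `A` are formal coordinates along the ideal `I` they
generate: `R → A ⧸ I` is onto and a form of degree `d` in the `s i` lies in `I ^ (d + 1)` only if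
it is the zero form. Equivalently, for finitely many `s i`, every quotient `A ⧸ I ^ K` is the
truncated polynomial algebra on the `s i`. -/
structure IsFormalCoordinates (R : Type*) {A σ : Type*} [CommRing R] [CommRing A] [Algebra R A]
    (s : σ → A) : Prop where
  exists_sub_algebraMap_mem (f : A) : ∃ r : R, f - algebraMap R A r ∈ Ideal.span (Set.range s)
  eq_zero_of_aeval_mem {d : ℕ} {p : MvPolynomial σ R} (hp : p.IsHomogeneous d)
    (hmem : aeval s p ∈ Ideal.span (Set.range s) ^ (d + 1)) : p = 0

theorem exists_span_range_pow_le_ker {A B σ : Type*} [CommRing A] [Ring B] [Finite σ]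
    {s : σ → A} (a : A →+* B) (ha : ∀ i, IsNilpotent (a (s i))) :
    ∃ K, Ideal.span (Set.range s) ^ K ≤ RingHom.ker a := by
  refine Ideal.exists_pow_le_of_le_radical_of_fg ?_ (Submodule.fg_span (Set.finite_range s))
  rw [Ideal.span_le, Set.range_subset_iff]
  intro i
  obtain ⟨k, hk⟩ := ha i
  exact ⟨k, by rw [RingHom.mem_ker, map_pow, hk]⟩

theorem aeval_mem_span_range_pow {R A σ : Type*} [CommRing R] [CommRing A] [Algebra R A]
    (s : σ → A) {p : MvPolynomial σ R} {d : ℕ} (hp : p ∈ idealOfVars σ R ^ d) :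
    aeval s p ∈ Ideal.span (Set.range s) ^ d := by
  have hmap := Ideal.mem_map_of_mem (aeval (R := R) s) hp
  rw [Ideal.map_pow, Ideal.map_span, ← Set.range_comp] at hmap
  simpa [Function.comp_def] using hmap

theorem sub_homogeneousComponent_mem_pow_succ {R σ : Type*} [CommRing R] {p : MvPolynomial σ R}
    {d : ℕ} (hp : p ∈ idealOfVars σ R ^ d) :
    p - homogeneousComponent d p ∈ idealOfVars σ R ^ (d + 1) := by
  rw [mem_pow_idealOfVars_iff'] at hp ⊢
  intro e he
  rw [coeff_sub, coeff_homogeneousComponent]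
  split_ifs with h
  · exact sub_self _
  · rw [sub_zero, hp e (by omega)]

namespace IsFormalCoordinates

variable {R A σ : Type*} [CommRing R] [CommRing A] [Algebra R A] {s : σ → A}

theorem mem_idealOfVars_pow (hs : IsFormalCoordinates R s) {k : ℕ} {p : MvPolynomial σ R}
    (hp : aeval s p ∈ Ideal.span (Set.range s) ^ k) : p ∈ idealOfVars σ R ^ k := by
  induction k with
  | zero => simp
  | succ d ih =>
    have hpd : p ∈ idealOfVars σ R ^ d := ih (Ideal.pow_le_pow_right d.le_succ hp)
    have hrest := sub_homogeneousComponent_mem_pow_succ hpd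
    have hlead : homogeneousComponent d p = 0 := by
      refine hs.eq_zero_of_aeval_mem (homogeneousComponent_isHomogeneous d p) ?_
      have hmem := sub_mem hp (aeval_mem_span_range_pow s hrest)
      rwa [← map_sub, sub_sub_cancel] at hmem
    rwa [hlead, sub_zero] at hrest

variable [Finite σ]

theorem exists_sub_aeval_mem_pow (hs : IsFormalCoordinates R s) (K : ℕ) (f : A) :
    ∃ p : MvPolynomial σ R, f - aeval s p ∈ Ideal.span (Set.range s) ^ K := by
  cases nonempty_fintype σ
  induction K generalizing f with
  | zero => exact ⟨0, by simp⟩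
  | succ K ih =>
    obtain ⟨r, hr⟩ := hs.exists_sub_algebraMap_mem f
    obtain ⟨g, hg⟩ := Ideal.mem_span_range_iff_exists_fun.1 hr
    choose p hp using fun i ↦ ih (g i)
    refine ⟨C r + ∑ i, p i * X i, ?_⟩
    have hsub : f - aeval s (C r + ∑ i, p i * X i) = ∑ i, (g i - aeval s (p i)) * s i := by
      simp only [map_add, map_sum, map_mul, aeval_X, aeval_C, sub_mul, Finset.sum_sub_distrib, hg]
      ring
    rw [hsub, pow_succ]
    exact sum_mem fun i _ ↦ Ideal.mul_mem_mul (hp i) (Ideal.subset_span ⟨i, rfl⟩)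

theorem algHom_ext {B : Type*} [Ring B] [Algebra R B] (hs : IsFormalCoordinates R s)
    {a b : A →ₐ[R] B} (hab : ∀ i, a (s i) = b (s i)) (ha : ∀ i, IsNilpotent (a (s i))) : a = b := by
  obtain ⟨K, haK⟩ := exists_span_range_pow_le_ker a.toRingHom ha
  obtain ⟨L, hbL⟩ := exists_span_range_pow_le_ker b.toRingHom fun i ↦ (hab i) ▸ ha i
  have hpoly : a.comp (aeval s) = b.comp (aeval s) := MvPolynomial.algHom_ext fun i ↦ by simp [hab]
  ext f
  obtain ⟨p, hp⟩ := hs.exists_sub_aeval_mem_pow (max K L) f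
  have hap : a (f - aeval (R := R) s p) = 0 := haK (Ideal.pow_le_pow_right (le_max_left K L) hp)
  have hbp : b (f - aeval (R := R) s p) = 0 := hbL (Ideal.pow_le_pow_right (le_max_right K L) hp)
  rw [map_sub, sub_eq_zero] at hap hbp
  rw [hap, hbp]
  exact DFunLike.congr_fun hpoly p

theorem exists_algHom_of_isNilpotent {B : Type*} [CommRing B] [Algebra R B]
    (hs : IsFormalCoordinates R s) {b : σ → B} (hb : ∀ i, IsNilpotent (b i)) :
    ∃ a : A →ₐ[R] B, ∀ i, a (s i) = b i := by
  obtain ⟨K, hK⟩ := exists_span_range_pow_le_ker (s := X (R := R)) (aeval (R := R) b).toRingHom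
    fun i ↦ by simpa using hb i
  let π := Ideal.Quotient.mkₐ R (Ideal.span (Set.range s) ^ K)
  have hsurj : Function.Surjective (π.comp (aeval (R := R) s)) := fun y ↦ by
    obtain ⟨f, rfl⟩ := Ideal.Quotient.mkₐ_surjective R _ y
    obtain ⟨p, hp⟩ := hs.exists_sub_aeval_mem_pow K f
    exact ⟨p, ((Ideal.Quotient.mk_eq_mk_iff_sub_mem _ _).2 hp).symm⟩
  have hker : RingHom.ker (π.comp (aeval s)).toRingHom ≤ RingHom.ker (aeval (R := R) b).toRingHom :=
    fun p hp ↦ hK (hs.mem_idealOfVars_pow (Ideal.Quotient.eq_zero_iff_mem.1 hp))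
  refine ⟨((π.comp (aeval s)).liftOfSurjective hsurj (aeval b) hker).comp π, fun i ↦ ?_⟩
  simpa using AlgHom.liftOfSurjective_apply (π.comp (aeval s)) hsurj (aeval b) hker (X i)

open scoped IsMulCommutative in
theorem existsUnique_algHom {B : Type*} [Ring B] [Algebra R B]
    (hs : IsFormalCoordinates R s) {b : σ → B} (hcomm : ∀ i j, Commute (b i) (b j))
    (hb : ∀ i, IsNilpotent (b i)) : ∃! a : A →ₐ[R] B, ∀ i, a (s i) = b i := by
  let S := Algebra.adjoin R (Set.range b)
  have : IsMulCommutative S := Algebra.isMulCommutative_adjoin R (by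
    rintro _ ⟨i, rfl⟩ _ ⟨j, rfl⟩
    exact hcomm i j)
  let bS : σ → S := fun i ↦ ⟨b i, Algebra.subset_adjoin ⟨i, rfl⟩⟩
  have hbS (i : σ) : IsNilpotent (bS i) :=
    (IsNilpotent.map_iff (f := S.val) Subtype.val_injective).1 (hb i)
  obtain ⟨a, ha⟩ := hs.exists_algHom_of_isNilpotent hbS
  have hval (i : σ) : S.val.comp a (s i) = b i := congrArg S.val (ha i)
  refine ⟨S.val.comp a, hval, fun a' ha' ↦ hs.algHom_ext (fun i ↦ ?_) fun i ↦ ?_⟩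
  · rw [ha', hval]
  · rw [ha']
    exact hb i

end IsFormalCoordinates

end FormalCoordinates

section Hadamard

open scoped ContDiff

universe u v

variable {E : Type u} [NormedAddCommGroup E] [NormedSpace ℝ E]
  {F : Type v} [NormedAddCommGroup F] [NormedSpace ℝ F]

theorem contDiff_uncurry_fderiv {g : E → ℝ → F} {n : WithTop ℕ∞}
    (hg : ContDiff ℝ (n + 1) g.uncurry) :
    ContDiff ℝ n (Function.uncurry fun x t ↦ fderiv ℝ (g · t) x) :=
  ContDiff.fderiv (f := fun (p : E × ℝ) y ↦ g y p.2)
    (hg.comp (contDiff_snd.prodMk (contDiff_snd.comp contDiff_fst))) contDiff_fst le_rfl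

theorem hasFDerivAt_intervalIntegral {g : E → ℝ → F}
    (hg : ContDiff ℝ 1 g.uncurry) (a b : ℝ) (x : E) :
    HasFDerivAt (fun x ↦ ∫ t in a..b, g x t) (∫ t in a..b, fderiv ℝ (g · t) x) x := by
  have hg' : Continuous (Function.uncurry fun x t ↦ fderiv ℝ (g · t) x) :=
    (contDiff_uncurry_fderiv (n := 0) (by simpa using hg)).continuous
  have hgc : Continuous g.uncurry := hg.continuous
  obtain ⟨C, hC⟩ := isCompact_uIcc.exists_bound_of_continuousOn
    (hg'.comp (Continuous.prodMk_right x)).continuousOn (s := Set.uIcc a b)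
  have hbound : ∀ᶠ y in 𝓝 x, ∀ t ∈ Set.uIcc a b, ‖fderiv ℝ (g · t) y‖ < C + 1 := by
    refine isCompact_uIcc.eventually_forall_of_forall_eventually fun t ht ↦ ?_
    exact hg'.norm.continuousAt.eventually_lt_const ((hC t ht).trans_lt (lt_add_one C))
  refine intervalIntegral.hasFDerivAt_integral_of_dominated_of_fderiv_le
    (F := g) (F' := fun x t ↦ fderiv ℝ (g · t) x) (bound := fun _ ↦ C + 1) hbound
    (.of_forall fun y ↦ ?_) ?_ ?_ (.of_forall fun t ht y hy ↦ ?_)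
    (intervalIntegrable_const (μ := MeasureTheory.volume)) (.of_forall fun t _ y _ ↦ ?_)
  · exact (hgc.comp (Continuous.prodMk_right y)).aestronglyMeasurable
  · exact (hgc.comp (Continuous.prodMk_right x)).intervalIntegrable _ _
  · exact (hg'.comp (Continuous.prodMk_right x)).aestronglyMeasurable
  · exact (hy t (Set.uIoc_subset_uIcc ht)).le
  · have hgt : ContDiff ℝ 1 (g · t) := hg.comp (contDiff_prodMk_left t)
    exact (hgt.differentiable one_ne_zero y).hasFDerivAt

-- The universe of `F` must absorb that of `E`, as the induction passes from `F` to `E →L[ℝ] F`.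
theorem contDiff_intervalIntegral {F : Type (max u v)} [NormedAddCommGroup F] [NormedSpace ℝ F]
    {g : E → ℝ → F} {n : ℕ∞} (hg : ContDiff ℝ n g.uncurry) (a b : ℝ) :
    ContDiff ℝ n fun x ↦ ∫ t in a..b, g x t := by
  suffices hnat : ∀ k : ℕ, ContDiff ℝ k g.uncurry →
      ContDiff ℝ k fun x ↦ ∫ t in a..b, g x t from
    contDiff_iff_forall_nat_le.2 fun k hk ↦ hnat k (hg.of_le (by exact_mod_cast hk))
  clear hg
  intro k hg
  induction k generalizing F with
  | zero =>
    rw [Nat.cast_zero, contDiff_zero] at hg ⊢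
    fun_prop
  | succ k ih =>
    push_cast at hg ⊢
    exact contDiff_succ_iff_hasFDerivAt.2 ⟨_, ih (contDiff_uncurry_fderiv hg),
      hasFDerivAt_intervalIntegral (hg.of_le le_add_self) a b⟩

theorem sub_eq_intervalIntegral_fderiv_apply [CompleteSpace F] {f : E → F}
    (hf : ContDiff ℝ 1 f) (x y : E) :
    f y - f x = (∫ t in (0 : ℝ)..1, fderiv ℝ f (x + t • (y - x))) (y - x) := by
  have hcont : Continuous fun t : ℝ ↦ fderiv ℝ f (x + t • (y - x)) :=
    (hf.continuous_fderiv one_ne_zero).comp (by fun_prop)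
  rw [ContinuousLinearMap.intervalIntegral_apply (hcont.intervalIntegrable 0 1),
    intervalIntegral.integral_eq_sub_of_hasDerivAt (f := fun t : ℝ ↦ f (x + t • (y - x)))]
  · simp
  · intro t _
    have hline : HasDerivAt (fun t : ℝ ↦ x + t • (y - x)) (y - x) t := by
      simpa using ((hasDerivAt_id t).smul_const (y - x)).const_add x
    exact (hf.differentiable one_ne_zero _).hasFDerivAt.comp_hasDerivAt t hline
  · exact (hcont.clm_apply continuous_const).intervalIntegrable _ _

theorem exists_contDiff_sub_eq_apply_sub [CompleteSpace F] {f : E → F} {n : ℕ∞}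
    (hf : ContDiff ℝ (n + 1) f) (x : E) :
    ∃ G : E → E →L[ℝ] F, ContDiff ℝ n G ∧ ∀ y, f y - f x = G y (y - x) := by
  refine ⟨fun y ↦ ∫ t in (0 : ℝ)..1, fderiv ℝ f (x + t • (y - x)), contDiff_intervalIntegral ?_ 0 1,
    sub_eq_intervalIntegral_fderiv_apply (hf.of_le le_add_self) x⟩
  have hsegment : ContDiff ℝ n fun p : E × ℝ ↦ x + p.2 • (p.1 - x) := by fun_prop
  exact (hf.fderiv_right le_rfl).comp hsegment

theorem exists_contDiff_sub_eq_sum_smul [CompleteSpace F] {ι : Type*} [Fintype ι]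
    {f : (ι → ℝ) → F} {n : ℕ∞} (hf : ContDiff ℝ (n + 1) f) (x : ι → ℝ) :
    ∃ g : ι → (ι → ℝ) → F, (∀ i, ContDiff ℝ n (g i)) ∧
      ∀ y, f y - f x = ∑ i, (y i - x i) • g i y := by
  classical
  obtain ⟨G, hG, hfG⟩ := exists_contDiff_sub_eq_apply_sub hf x
  refine ⟨fun i y ↦ G y (Pi.single i 1), fun i ↦ hG.clm_apply contDiff_const, fun y ↦ ?_⟩
  have hsum : ∑ i, (y i - x i) • Pi.single i (1 : ℝ) = y - x := by
    simpa using (Pi.basisFun ℝ ι).sum_repr (y - x)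
  simp only [hfG y, ← hsum, map_sum, map_smul]

end Hadamard

theorem exists_contDiff_eventuallyEq {E F : Type*} [NormedAddCommGroup E] [NormedSpace ℝ E]
    [HasContDiffBump E] [NormedAddCommGroup F] [NormedSpace ℝ F] {f : E → F} {n : ℕ∞} {U : Set E}
    (hU : IsOpen U) {x : E} (hx : x ∈ U) (hf : ContDiffOn ℝ n f U) :
    ∃ g : E → F, ContDiff ℝ n g ∧ g =ᶠ[𝓝 x] f := by
  obtain ⟨r, hr, hrU⟩ := Metric.nhds_basis_closedBall.mem_iff.1 (hU.mem_nhds hx)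
  let φ : ContDiffBump x := ⟨r / 2, r, half_pos hr, half_lt_self hr⟩
  refine ⟨fun y ↦ φ y • f y, contMDiff_iff_contDiff.1 (contMDiff_of_tsupport fun y hy ↦ ?_), ?_⟩
  · have hyU : y ∈ U := hrU (φ.tsupport_eq ▸ tsupport_smul_subset_left φ f hy)
    exact (φ.contDiffAt.smul (hf.contDiffAt (hU.mem_nhds hyU))).contMDiffAt
  · filter_upwards [φ.eventuallyEq_one] with y hy
    simp [hy]

section HomogeneousPolynomial

open MvPolynomial

theorem eval_smul_of_isHomogeneous {R σ : Type*} [CommSemiring R] {p : MvPolynomial σ R} {d : ℕ}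
    (hp : p.IsHomogeneous d) (t : R) (v : σ → R) : eval (t • v) p = t ^ d * eval v p := by
  simp only [eval_eq, Finset.mul_sum]
  refine Finset.sum_congr rfl fun e he ↦ ?_
  simp only [Pi.smul_apply, smul_eq_mul, mul_pow, Finset.prod_mul_distrib,
    Finset.prod_pow_eq_pow_sum, ← hp.degree_eq_sum_deg_support he]
  ring

theorem eq_zero_of_isHomogeneous_of_isBigO {𝕜 σ : Type*} [NontriviallyNormedField 𝕜] [Fintype σ]
    {p : MvPolynomial σ 𝕜} {d : ℕ} (hp : p.IsHomogeneous d)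
    (hO : (fun y ↦ eval y p) =O[𝓝 0] fun y ↦ ‖y‖ ^ (d + 1)) : p = 0 := by
  refine hp.eq_zero_of_forall_eval_eq_zero fun v ↦ by_contra fun hv ↦ ?_
  have hline : Tendsto (fun t : 𝕜 ↦ t • v) (𝓝 0) (𝓝 0) :=
    Continuous.tendsto' (by fun_prop) _ _ (zero_smul _ v)
  have hO_line : (fun t : 𝕜 ↦ t ^ d * eval v p) =O[𝓝 0] fun t ↦ t ^ (d + 1) := by
    refine ((hO.comp_tendsto hline).congr_left
      fun t ↦ eval_smul_of_isHomogeneous hp t v).trans (.of_bound (‖v‖ ^ (d + 1)) ?_)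
    exact .of_forall fun t ↦ by simp [norm_smul, mul_pow, mul_comm]
  have ho : (fun t : 𝕜 ↦ t ^ d) =o[𝓝[≠] 0] fun t ↦ t ^ d := by
    have hpow : (fun t : 𝕜 ↦ t ^ d) =O[𝓝 0] fun t ↦ t ^ (d + 1) := by
      simpa only [mul_comm _ (eval v p), Asymptotics.isBigO_const_mul_left_iff hv] using hO_line
    exact (hpow.trans_isLittleO (Asymptotics.isLittleO_pow_pow d.lt_succ_self)).mono
      nhdsWithin_le_nhds
  refine Asymptotics.isLittleO_irrefl (Eventually.frequently ?_) ho
  filter_upwards [self_mem_nhdsWithin] with t ht using pow_ne_zero d ht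

end HomogeneousPolynomial

namespace SmoothGermAt

open MvPolynomial
open scoped ContDiff

variable {n : ℕ} {x : Fin n → ℝ}

/-- The germ at `x` of a globally defined smooth function. -/
def ofContDiff (x : Fin n → ℝ) {f : (Fin n → ℝ) → ℝ} (hf : ContDiff ℝ ∞ f) : SmoothGermAt n x :=
  ⟨f, f, ⟨Set.univ, isOpen_univ, trivial, hf.contDiffOn⟩, rfl⟩

theorem coe_ofContDiff {f : (Fin n → ℝ) → ℝ} (hf : ContDiff ℝ ∞ f) :
    (ofContDiff x hf : Germ (𝓝 x) ℝ) = f :=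
  rfl

theorem exists_eq_ofContDiff (F : SmoothGermAt n x) :
    ∃ (f : (Fin n → ℝ) → ℝ) (hf : ContDiff ℝ ∞ f), F = ofContDiff x hf := by
  obtain ⟨_, f, ⟨U, hU, hxU, hf⟩, rfl⟩ := F
  obtain ⟨g, hg, hgf⟩ := exists_contDiff_eventuallyEq hU hxU hf
  exact ⟨g, hg, Subtype.ext (Germ.coe_eq.2 hgf.symm)⟩

theorem coe_algebraMap (r : ℝ) :
    (algebraMap ℝ (SmoothGermAt n x) r : Germ (𝓝 x) ℝ) = ((fun _ ↦ r : (Fin n → ℝ) → ℝ) :) := by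
  change r • ((1 : (Fin n → ℝ) → ℝ) : Germ (𝓝 x) ℝ) = _
  rw [← Germ.coe_smul]
  exact congrArg _ (funext fun _ ↦ mul_one r)

theorem evalHom_algebraMap (r : ℝ) : evalHom n x (algebraMap ℝ (SmoothGermAt n x) r) = r :=
  congrArg Germ.value (coe_algebraMap (x := x) r)

/-- The germ at `x` of `y ↦ y i - x i`. -/
noncomputable def centeredCoord (n : ℕ) (x : Fin n → ℝ) (i : Fin n) : SmoothGermAt n x :=
  coordFunGermAt n x i - algebraMap ℝ _ (x i)

theorem coe_centeredCoord (i : Fin n) :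
    (centeredCoord n x i : Germ (𝓝 x) ℝ) = ((fun y ↦ y i - x i : (Fin n → ℝ) → ℝ) :) := by
  rw [centeredCoord, AddSubgroupClass.coe_sub, coe_algebraMap]
  rfl

theorem evalHom_centeredCoord (i : Fin n) : evalHom n x (centeredCoord n x i) = 0 :=
  (congrArg Germ.value (coe_centeredCoord i)).trans (sub_self _)

theorem coe_aeval_centeredCoord (p : MvPolynomial (Fin n) ℝ) :
    (aeval (centeredCoord n x) p : Germ (𝓝 x) ℝ) =
      ((fun y ↦ eval (y - x) p : (Fin n → ℝ) → ℝ) :) := by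
  induction p using MvPolynomial.induction_on with
  | C r => simp only [aeval_C, coe_algebraMap, eval_C]
  | add p q hp hq =>
    rw [map_add, AddMemClass.coe_add, hp, hq, ← Germ.coe_add]
    exact congrArg _ (funext fun y ↦ (map_add (eval (y - x)) p q).symm)
  | mul_X p i hp =>
    rw [map_mul, aeval_X, MulMemClass.coe_mul, hp, coe_centeredCoord, ← Germ.coe_mul]
    exact congrArg _ (funext fun y ↦ by simp)

theorem mIdeal_eq_span_range_centeredCoord :
    mIdeal n x = Ideal.span (Set.range (centeredCoord n x)) := by
  refine le_antisymm (fun F hF ↦ ?_) (Ideal.span_le.2 ?_)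
  · obtain ⟨f, hf, rfl⟩ := exists_eq_ofContDiff F
    have hfx : f x = 0 := hF
    obtain ⟨g, hg, hfg⟩ := exists_contDiff_sub_eq_sum_smul (n := ⊤) hf x
    refine Ideal.mem_span_range_iff_exists_fun.2 ⟨fun i ↦ ofContDiff x (hg i), Subtype.ext ?_⟩
    simp only [AddSubmonoidClass.coe_finsetSum, MulMemClass.coe_mul, coe_ofContDiff,
      coe_centeredCoord, ← Germ.coe_mul, ← Germ.coe_sum]
    refine congrArg _ (funext fun y ↦ ?_)
    rw [← sub_zero (f y), ← hfx, hfg y, Finset.sum_apply]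
    simp only [Pi.mul_apply, smul_eq_mul, mul_comm]
  · rintro _ ⟨i, rfl⟩
    exact evalHom_centeredCoord i

theorem isBigO_of_mem_mIdeal_pow {k : ℕ} {F : SmoothGermAt n x} (hF : F ∈ mIdeal n x ^ k)
    {f : (Fin n → ℝ) → ℝ} (hf : (F : Germ (𝓝 x) ℝ) = f) :
    f =O[𝓝 x] fun y ↦ ‖y - x‖ ^ k := by
  induction k generalizing F f with
  | zero =>
    obtain ⟨g, hg, rfl⟩ := exists_eq_ofContDiff F
    simpa using (hg.continuous.continuousAt.isBigO_one ℝ).congr' (Germ.coe_eq.1 hf) .rfl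
  | succ k ih =>
    rw [pow_succ] at hF
    induction hF using Submodule.mul_induction_on' generalizing f with
    | mem_mul_mem F hF G hG =>
      obtain ⟨f, hf', rfl⟩ := exists_eq_ofContDiff F
      obtain ⟨g, hg, rfl⟩ := exists_eq_ofContDiff G
      have hgx : g x = 0 := hG
      have hgO : g =O[𝓝 x] fun y ↦ ‖y - x‖ := by
        simpa [hgx] using (hg.differentiable (by simp) x).isBigO_sub.norm_right
      simp only [pow_succ]
      exact ((ih hF rfl).mul hgO).congr' (Germ.coe_eq.1 hf) .rfl
    | add F _ G _ ihF ihG =>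
      obtain ⟨f', hf', rfl⟩ := exists_eq_ofContDiff F
      obtain ⟨g', hg', rfl⟩ := exists_eq_ofContDiff G
      exact ((ihF rfl).add (ihG rfl)).congr' (Germ.coe_eq.1 hf) .rfl

theorem isFormalCoordinates_centeredCoord (n : ℕ) (x : Fin n → ℝ) :
    IsFormalCoordinates ℝ (centeredCoord n x) where
  exists_sub_algebraMap_mem F := by
    refine ⟨evalHom n x F, ?_⟩
    rw [← mIdeal_eq_span_range_centeredCoord, mIdeal, RingHom.mem_ker, map_sub,
      evalHom_algebraMap, sub_self]
  eq_zero_of_aeval_mem {d p} hp hmem := by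
    rw [← mIdeal_eq_span_range_centeredCoord] at hmem
    have htrans : Tendsto (fun v ↦ x + v) (𝓝 0) (𝓝 x) :=
      Continuous.tendsto' (by fun_prop) _ _ (add_zero x)
    have hO := (isBigO_of_mem_mIdeal_pow hmem (coe_aeval_centeredCoord p)).comp_tendsto htrans
    exact eq_zero_of_isHomogeneous_of_isBigO hp (by simpa [Function.comp_def] using hO)

end SmoothGermAt

theorem existsUnique_algHom_smoothGermAt_general (m : ℕ) (x₀ : Fin m → ℝ) {B : Type*} [Ring B]
    [Algebra ℝ B] (c : Fin m → B) (hcomm : ∀ i j, Commute (c i) (c j))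
    (hc : ∀ i, IsNilpotent (c i - algebraMap ℝ B (x₀ i))) :
    ∃! a : SmoothGermAt m x₀ →ₐ[ℝ] B, ∀ i, a (coordFunGermAt m x₀ i) = c i := by
  have hcomm' (i j : Fin m) :
      Commute (c i - algebraMap ℝ B (x₀ i)) (c j - algebraMap ℝ B (x₀ j)) :=
    ((hcomm i j).sub_right (Algebra.commutes _ _).symm).sub_left (Algebra.commutes _ _)
  have hcoord (a : SmoothGermAt m x₀ →ₐ[ℝ] B) (i : Fin m) :
      a (SmoothGermAt.centeredCoord m x₀ i) = c i - algebraMap ℝ B (x₀ i) ↔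
        a (coordFunGermAt m x₀ i) = c i := by
    rw [SmoothGermAt.centeredCoord, map_sub, AlgHom.commutes, sub_left_inj]
  simpa only [hcoord] using
    (SmoothGermAt.isFormalCoordinates_centeredCoord m x₀).existsUnique_algHom hcomm' hc

/-- **Lemma 3.11.** Let `x₀ ∈ ℝ^m` and let `c 1, …, c m` be pairwise commuting elements of the
Grassmann algebra `λ_N = ExteriorAlgebra ℝ (Fin N → ℝ)` whose augmentations are the
coordinates of `x₀`. Then there is exactly one `ℝ`-algebra homomorphism from the algebra
`C^∞_{x₀}` of germs at `x₀` of smooth real-valued functions to `λ_N` sending the germ of the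
`i`-th coordinate function to `c i` for every `i`. -/
theorem existsUnique_algHom_smoothGermAt (m N : ℕ) (x₀ : Fin m → ℝ)
    (c : Fin m → ExteriorAlgebra ℝ (Fin N → ℝ))
    (hcomm : ∀ i j, c i * c j = c j * c i)
    (hc : ∀ i, ExteriorAlgebra.algebraMapInv (c i) = x₀ i) :
    ∃! a : SmoothGermAt m x₀ →ₐ[ℝ] ExteriorAlgebra ℝ (Fin N → ℝ),
      ∀ i : Fin m, a (coordFunGermAt m x₀ i) = c i :=
  existsUnique_algHom_smoothGermAt_general m x₀ c hcomm fun i ↦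
    isNilpotent_of_algebraMapInv_eq_zero (by simp [hc])
end

section
/- Let A be a commutative unital ℝ-algebra, m ∈ ℕ, x₀ ∈ ℝ^m, and let a_1, …, a_m ∈ A be nilpotent elements. Then the map T : C^∞_{x₀} → A defined by T(f) = Σ_{α ∈ ℕ^m} (1/α!)·(∂^α f)(x₀) • a_1^{α_1} ⋯ a_m^{α_m} — where ∂^α f denotes the iterated partial derivative of f of multi-index α, α! = α_1!⋯α_m!, and the sum is finite because all but finitely many monomials a_1^{α_1}⋯a_m^{α_m} vanish by nilpotency — is a well-defined ℝ-algebra homomorphism. -/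
open Filter Topology

/-- The partial derivative `∂_i f` of a function `f : ℝ^m → ℝ`. -/
noncomputable def partialDeriv' {m : ℕ} (i : Fin m) (f : (Fin m → ℝ) → ℝ) :
    (Fin m → ℝ) → ℝ :=
  fun z => fderiv ℝ f z (Pi.single i 1)

/-- The iterated partial derivative `∂^α f = ∂_0^{α 0} ⋯ ∂_{m-1}^{α (m-1)} f` of a function
`f : ℝ^m → ℝ`, for a multi-index `α : Fin m → ℕ`. (For smooth `f` the order of the partial
derivatives is immaterial.) -/
noncomputable def multiDeriv {m : ℕ} (α : Fin m → ℕ) (f : (Fin m → ℝ) → ℝ) :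
    (Fin m → ℝ) → ℝ :=
  (List.finRange m).foldr (fun i g => (partialDeriv' i)^[α i] g) f

/-!
Taylor substitution is the composition of Taylor expansion `C^∞_{x₀} → ℝ⟦X_1, …, X_m⟧` with
evaluation of power series at `a`. Evaluation at nilpotents is evaluation of power series for the
discrete topologies. Expansion is multiplicative because it turns the commuting derivations `∂_i`
of the algebra of germs into the formal partial derivatives: in characteristic zero the constant
term and the formal partial derivatives determine a power series, so `T (f * g) = T f * T g` follows
by induction on multi-indices from the two Leibniz rules.
-/

section CommutingMonomials

variable {σ M : Type*} [Monoid M] {x : σ → M}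

theorem pairwise_commute_pow (hx : ∀ i j, Commute (x i) (x j)) (n : σ → ℕ) (s : Set σ) :
    s.Pairwise (Function.onFun Commute fun i => x i ^ n i) :=
  fun i _ j _ _ => (hx i j).pow_pow (n i) (n j)

/-- The monomial `∏ i, x i ^ n i` in pairwise commuting elements `x i` of a monoid, which need not
be commutative itself; it encodes the operators `∂^α` for commuting derivations `∂_i`. -/
noncomputable def commMonomial [Fintype σ] (x : σ → M) (hx : ∀ i j, Commute (x i) (x j))
    (n : σ →₀ ℕ) : M :=
  Finset.univ.noncommProd (fun i => x i ^ n i) (pairwise_commute_pow hx n _)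

variable [Fintype σ] (hx : ∀ i j, Commute (x i) (x j))

theorem commMonomial_zero : commMonomial x hx 0 = 1 :=
  (Finset.noncommProd_eq_pow_card _ _ _ 1 fun i _ => pow_zero (x i)).trans (one_pow _)

theorem commMonomial_add_single (n : σ →₀ ℕ) (i : σ) :
    commMonomial x hx (n + Finsupp.single i 1) = commMonomial x hx n * x i := by
  classical
  have off_i : ∀ j ∈ Finset.univ.erase i, x j ^ (n + Finsupp.single i 1 : σ →₀ ℕ) j = x j ^ n j :=
    fun j hj => by simp [Finset.ne_of_mem_erase hj]
  unfold commMonomial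
  rw [← Finset.noncommProd_erase_mul _ (Finset.mem_univ i),
    ← Finset.noncommProd_erase_mul _ (Finset.mem_univ i) fun j => x j ^ n j,
    mul_assoc, ← pow_succ]
  exact congrArg₂ (· * ·) (Finset.noncommProd_congr rfl off_i _) (by simp)

theorem commMonomial_fin {m : ℕ} {x : Fin m → M} (hx : ∀ i j, Commute (x i) (x j))
    (n : Fin m →₀ ℕ) :
    commMonomial x hx n = ((List.finRange m).map fun i => x i ^ n i).prod := by
  rw [← Finset.noncommProd_toFinset (List.finRange m) _ (pairwise_commute_pow hx n _)
    (List.nodup_finRange m)]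
  exact Finset.noncommProd_congr (List.toFinset_finRange m).symm (fun _ _ => rfl) _

end CommutingMonomials

theorem finsupp_nat_induction {σ : Type*} {P : (σ →₀ ℕ) → Prop} (zero : P 0)
    (add_single : ∀ n i, P n → P (n + Finsupp.single i 1)) (n : σ →₀ ℕ) : P n := by
  classical
  obtain ⟨s, rfl⟩ := Multiset.toFinsupp.surjective n
  induction s using Multiset.induction_on with
  | empty => simpa only [map_zero] using zero
  | cons i s ih =>
    rw [← Multiset.singleton_add, add_comm, map_add, Multiset.toFinsupp_singleton]
    exact add_single _ i ih

section TaylorSeries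

open MvPowerSeries

theorem prod_factorial_add_single {σ : Type*} [Fintype σ] (n : σ →₀ ℕ) (i : σ) :
    ∏ j, ((n + Finsupp.single i 1 : σ →₀ ℕ) j).factorial = (n i + 1) * ∏ j, (n j).factorial := by
  classical
  rw [← Finset.mul_prod_erase _ _ (Finset.mem_univ i),
    ← Finset.mul_prod_erase _ (fun j => (n j).factorial) (Finset.mem_univ i), ← mul_assoc,
    ← Nat.factorial_succ, Finsupp.add_apply, Finsupp.single_eq_same]
  congr 1
  exact Finset.prod_congr rfl fun j hj => by simp [Finset.ne_of_mem_erase hj]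

theorem coeff_add_single_eq_of_pderiv {σ R : Type*} [CommRing R] [IsDomain R] [CharZero R]
    {φ ψ : MvPowerSeries σ R} {n : σ →₀ ℕ} {i : σ}
    (h : coeff n (pderiv R i φ) = coeff n (pderiv R i ψ)) :
    coeff (n + Finsupp.single i 1) φ = coeff (n + Finsupp.single i 1) ψ := by
  rw [coeff_pderiv, coeff_pderiv] at h
  exact mul_right_cancel₀ (Nat.cast_add_one_ne_zero (n i)) h

variable {σ K B : Type*} [Fintype σ] [Field K] [CommRing B] [Algebra K B]

variable (D : σ → Derivation K B B)
  (hD : ∀ i j, Commute (D i).toLinearMap (D j).toLinearMap) (ε : B →ₐ[K] K)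

/-- The formal Taylor series `∑ α, ε (D^α b) / α! • X^α` of `b : B` with respect to commuting
derivations `D i` of `B`, where the character `ε` plays the role of evaluation at the base point. -/
noncomputable def taylorSeries : B →ₗ[K] MvPowerSeries σ K :=
  LinearMap.pi fun n =>
    (∏ i, ((n i).factorial : K))⁻¹ • ε.toLinearMap ∘ₗ commMonomial (fun i => (D i).toLinearMap) hD n

theorem coeff_taylorSeries (n : σ →₀ ℕ) (b : B) :
    coeff n (taylorSeries D hD ε b) = (∏ i, ((n i).factorial : K))⁻¹ *
      ε (commMonomial (fun i => (D i).toLinearMap) hD n b) :=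
  rfl

theorem constantCoeff_taylorSeries (b : B) : constantCoeff (taylorSeries D hD ε b) = ε b := by
  rw [← coeff_zero_eq_constantCoeff_apply, coeff_taylorSeries, commMonomial_zero]
  simp

variable [CharZero K]

theorem pderiv_taylorSeries (i : σ) (b : B) :
    pderiv K i (taylorSeries D hD ε b) = taylorSeries D hD ε (D i b) := by
  ext n
  have hn : (n i + 1 : K) ≠ 0 := Nat.cast_add_one_ne_zero (n i)
  have factorial_succ : ∏ j, (((n + Finsupp.single i 1 : σ →₀ ℕ) j).factorial : K) =
      (n i + 1) * ∏ j, ((n j).factorial : K) := mod_cast prod_factorial_add_single n i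
  rw [coeff_pderiv, coeff_taylorSeries, coeff_taylorSeries, commMonomial_add_single,
    factorial_succ, Module.End.mul_apply, Derivation.coeFn_coe]
  field_simp

theorem taylorSeries_one : taylorSeries D hD ε 1 = 1 :=
  pderiv.ext (fun i => by rw [pderiv_taylorSeries]; simp)
    (by rw [constantCoeff_taylorSeries, map_one, map_one])

theorem taylorSeries_mul (b c : B) :
    taylorSeries D hD ε (b * c) = taylorSeries D hD ε b * taylorSeries D hD ε c := by
  ext n
  induction n using finsupp_nat_induction generalizing b c with
  | zero => simp only [coeff_zero_eq_constantCoeff_apply, map_mul, constantCoeff_taylorSeries]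
  | add_single n i ih =>
    apply coeff_add_single_eq_of_pderiv
    simp only [pderiv_taylorSeries, Derivation.leibniz, smul_eq_mul, map_add, ih]

/-- `taylorSeries` as a homomorphism of algebras. -/
noncomputable def taylorAlgHom : B →ₐ[K] MvPowerSeries σ K :=
  AlgHom.ofLinearMap (taylorSeries D hD ε) (taylorSeries_one D hD ε) (taylorSeries_mul D hD ε)

end TaylorSeries

theorem exists_algHom_eq_finsum_of_isNilpotent {σ R A : Type*} [Finite σ] [CommRing R] [CommRing A]
    [Algebra R A] (a : σ → A) (ha : ∀ i, IsNilpotent (a i)) :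
    ∃ E : MvPowerSeries σ R →ₐ[R] A, ∀ φ, E φ =
      ∑ᶠ n : σ →₀ ℕ, MvPowerSeries.coeff n φ • n.prod fun i k => a i ^ k := by
  let _ : UniformSpace R := ⊥
  let _ : UniformSpace A := ⊥
  have : DiscreteTopology R := ⟨rfl⟩
  have : DiscreteTopology A := ⟨rfl⟩
  have : ContinuousSMul R A := ⟨continuous_of_discreteTopology⟩
  have hasEval : MvPowerSeries.HasEval a :=
    ⟨fun i => (ha i).isTopologicallyNilpotent, by simp⟩
  refine ⟨MvPowerSeries.aeval hasEval, fun φ => ?_⟩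
  rw [MvPowerSeries.aeval_eq_sum, tsum_eq_finsum]
  exact (MvPowerSeries.hasSum_aeval hasEval φ).summable.hasFiniteSupport_of_discreteTopology

section PartialDerivatives

variable {m : ℕ} {f g : (Fin m → ℝ) → ℝ} {x : Fin m → ℝ}

theorem contDiffAt_partialDeriv' (hf : ContDiffAt ℝ (⊤ : ℕ∞) f x) (i : Fin m) :
    ContDiffAt ℝ (⊤ : ℕ∞) (partialDeriv' i f) x :=
  (hf.fderiv_right (m := (⊤ : ℕ∞)) (by simp)).clm_apply contDiffAt_const

theorem partialDeriv'_add (hf : DifferentiableAt ℝ f x) (hg : DifferentiableAt ℝ g x) (i : Fin m) :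
    partialDeriv' i (f + g) x = partialDeriv' i f x + partialDeriv' i g x := by
  simp [partialDeriv', fderiv_add hf hg]

theorem partialDeriv'_const_smul (hf : DifferentiableAt ℝ f x) (c : ℝ) (i : Fin m) :
    partialDeriv' i (c • f) x = c • partialDeriv' i f x := by
  simp [partialDeriv', fderiv_const_smul hf]

theorem partialDeriv'_mul (hf : DifferentiableAt ℝ f x) (hg : DifferentiableAt ℝ g x) (i : Fin m) :
    partialDeriv' i (f * g) x = f x * partialDeriv' i g x + g x * partialDeriv' i f x := by
  simp [partialDeriv', fderiv_mul hf hg]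

theorem partialDeriv'_comm (hf : ContDiffAt ℝ 2 f x) (i j : Fin m) :
    partialDeriv' i (partialDeriv' j f) x = partialDeriv' j (partialDeriv' i f) x := by
  have hdf : DifferentiableAt ℝ (fderiv ℝ f) x :=
    (hf.fderiv_right (m := 1) (by norm_num)).differentiableAt (by simp)
  have second_deriv (k l : Fin m) : partialDeriv' k (partialDeriv' l f) x =
      fderiv ℝ (fderiv ℝ f) x (Pi.single k 1) (Pi.single l 1) := by
    change fderiv ℝ (fun y => fderiv ℝ f y (Pi.single l 1)) x (Pi.single k 1) = _
    rw [fderiv_clm_apply hdf (differentiableAt_const _)]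
    simp
  rw [second_deriv, second_deriv]
  exact hf.isSymmSndFDerivAt (by simp) _ _

theorem partialDeriv'_congr (h : f =ᶠ[𝓝 x] g) (i : Fin m) :
    partialDeriv' i f =ᶠ[𝓝 x] partialDeriv' i g :=
  (h.fderiv (𝕜 := ℝ)).fun_comp fun L => L (Pi.single i 1)

/-- The operator that `∂_i` induces on germs at `x`; on germs of non-differentiable functions it
takes junk values, since `fderiv` does. -/
noncomputable def germPartialDeriv (i : Fin m) : Germ (𝓝 x) ℝ → Germ (𝓝 x) ℝ :=
  Germ.map' (partialDeriv' i) fun _ _ h => partialDeriv'_congr h i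

end PartialDerivatives

namespace SmoothGermAt

variable {m : ℕ} {x : Fin m → ℝ}

theorem coe_mem_iff {f : (Fin m → ℝ) → ℝ} :
    (f : Germ (𝓝 x) ℝ) ∈ SmoothGermAt m x ↔ ∀ᶠ y in 𝓝 x, ContDiffAt ℝ (⊤ : ℕ∞) f y := by
  constructor
  · rintro ⟨g, ⟨U, hU, hxU, hg⟩, hfg⟩
    filter_upwards [hU.mem_nhds hxU, (Germ.coe_eq.1 hfg).eventuallyEq_nhds] with y hy hfgy
    exact (hg.contDiffAt (hU.mem_nhds hy)).congr_of_eventuallyEq hfgy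
  · intro hf
    obtain ⟨U, hfU, hU, hxU⟩ := eventually_nhds_iff.1 hf
    exact ⟨f, ⟨U, hU, hxU, fun y hy => (hfU y hy).contDiffWithinAt⟩, rfl⟩

theorem exists_rep (φ : SmoothGermAt m x) :
    ∃ (f : (Fin m → ℝ) → ℝ) (hf : ∀ᶠ y in 𝓝 x, ContDiffAt ℝ (⊤ : ℕ∞) f y),
      φ = ⟨f, coe_mem_iff.2 hf⟩ := by
  obtain ⟨_, f, hf, rfl⟩ := φ
  exact ⟨f, coe_mem_iff.1 ⟨f, hf, rfl⟩, rfl⟩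

/-- The partial derivative `∂_i` as a derivation of the algebra of smooth germs at `x`. -/
noncomputable def partialDeriv (i : Fin m) :
    Derivation ℝ (SmoothGermAt m x) (SmoothGermAt m x) :=
  Derivation.mk'
    { toFun φ := ⟨germPartialDeriv i φ, by
        obtain ⟨f, hf, rfl⟩ := exists_rep φ
        exact coe_mem_iff.2 (hf.mono fun y hy => contDiffAt_partialDeriv' hy i)⟩
      map_add' φ ψ := by
        obtain ⟨f, hf, rfl⟩ := exists_rep φ
        obtain ⟨g, hg, rfl⟩ := exists_rep ψ
        refine Subtype.ext (Germ.coe_eq.2 ?_)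
        filter_upwards [hf, hg] with y hfy hgy
        exact partialDeriv'_add (hfy.differentiableAt (by simp)) (hgy.differentiableAt (by simp)) i
      map_smul' c φ := by
        obtain ⟨f, hf, rfl⟩ := exists_rep φ
        exact Subtype.ext (Germ.coe_eq.2 (hf.mono fun y hfy =>
          partialDeriv'_const_smul (hfy.differentiableAt (by simp)) c i)) }
    fun φ ψ => by
      obtain ⟨f, hf, rfl⟩ := exists_rep φ
      obtain ⟨g, hg, rfl⟩ := exists_rep ψ
      refine Subtype.ext (Germ.coe_eq.2 ?_)
      filter_upwards [hf, hg] with y hfy hgy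
      exact partialDeriv'_mul (hfy.differentiableAt (by simp)) (hgy.differentiableAt (by simp)) i

theorem commute_partialDeriv (i j : Fin m) :
    Commute (partialDeriv (x := x) i).toLinearMap (partialDeriv (x := x) j).toLinearMap :=
  LinearMap.ext fun φ => by
    obtain ⟨f, hf, rfl⟩ := exists_rep φ
    exact Subtype.ext (Germ.coe_eq.2 (hf.mono fun y hy =>
      partialDeriv'_comm (hy.of_le (WithTop.coe_le_coe.2 le_top)) i j))

theorem coe_partialDeriv_pow {φ : SmoothGermAt m x} {f : (Fin m → ℝ) → ℝ}
    (h : (φ : Germ (𝓝 x) ℝ) = f) (i : Fin m) (k : ℕ) :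
    (((partialDeriv i).toLinearMap ^ k) φ : Germ (𝓝 x) ℝ) = ((partialDeriv' i)^[k] f) := by
  induction k with
  | zero => exact h
  | succ k ih =>
    rw [pow_succ', Function.iterate_succ_apply']
    exact congrArg (germPartialDeriv i) ih

theorem coe_commMonomial_partialDeriv {φ : SmoothGermAt m x} {f : (Fin m → ℝ) → ℝ}
    (h : (φ : Germ (𝓝 x) ℝ) = f) (n : Fin m →₀ ℕ) :
    (commMonomial (fun i => (partialDeriv i).toLinearMap) commute_partialDeriv n φ : Germ (𝓝 x) ℝ)
      = multiDeriv n f := by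
  have along_list (l : List (Fin m)) :
      ((l.map fun i => (partialDeriv i).toLinearMap ^ n i).prod φ : Germ (𝓝 x) ℝ) =
        (l.foldr (fun i g => (partialDeriv' i)^[n i] g) f : (Fin m → ℝ) → ℝ) := by
    induction l with
    | nil => exact h
    | cons i l ih => exact coe_partialDeriv_pow ih i (n i)
  rw [commMonomial_fin]
  exact along_list (List.finRange m)

/-- `SmoothGermAt.evalHom`, as a homomorphism of `ℝ`-algebras. -/
noncomputable def evalAlgHom (m : ℕ) (x : Fin m → ℝ) : SmoothGermAt m x →ₐ[ℝ] ℝ :=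
  { evalHom m x with commutes' := fun r => mul_one r }

/-- The Taylor expansion at `x` of smooth germs, as a homomorphism to formal power series in the
displacement from `x`. -/
noncomputable def taylorExpansion (m : ℕ) (x : Fin m → ℝ) :
    SmoothGermAt m x →ₐ[ℝ] MvPowerSeries (Fin m) ℝ :=
  taylorAlgHom partialDeriv commute_partialDeriv (evalAlgHom m x)

theorem coeff_taylorExpansion {φ : SmoothGermAt m x} {f : (Fin m → ℝ) → ℝ}
    (h : (φ : Germ (𝓝 x) ℝ) = f) (n : Fin m →₀ ℕ) :
    MvPowerSeries.coeff n (taylorExpansion m x φ) =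
      (∏ i, ((n i).factorial : ℝ))⁻¹ * multiDeriv n f x :=
  congrArg (fun ψ : Germ (𝓝 x) ℝ => (∏ i, ((n i).factorial : ℝ))⁻¹ * ψ.value)
    (coe_commMonomial_partialDeriv h n)

end SmoothGermAt

/-- **(Berezin's Grassmann-analytic continuation; formula (3.1) and Remark 3.5.)**
Let `A` be a commutative unital `ℝ`-algebra, `x₀ ∈ ℝ^m` and let `a 1, …, a m ∈ A` be
nilpotent. Then the Taylor-substitution map
`T f = ∑_α (1/α!) · (∂^α f)(x₀) • a 1 ^ α 1 ⋯ a m ^ α m` (a finite sum, by nilpotency)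
is a well-defined `ℝ`-algebra homomorphism on the algebra `C^∞_{x₀}` of germs at `x₀` of
smooth real-valued functions. -/
theorem exists_taylor_algHom (A : Type*) [CommRing A] [Algebra ℝ A] (m : ℕ)
    (x₀ : Fin m → ℝ) (a : Fin m → A) (ha : ∀ i, IsNilpotent (a i)) :
    ∃ T : SmoothGermAt m x₀ →ₐ[ℝ] A,
      ∀ (f : (Fin m → ℝ) → ℝ)
        (hf : ∃ U : Set (Fin m → ℝ), IsOpen U ∧ x₀ ∈ U ∧ ContDiffOn ℝ (⊤ : ℕ∞) f U),
        T ⟨↑f, f, hf, rfl⟩ =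
          ∑ᶠ α : Fin m → ℕ,
            ((∏ i, ((α i).factorial : ℝ))⁻¹ * multiDeriv α f x₀) • ∏ i, a i ^ α i := by
  obtain ⟨E, hE⟩ := exists_algHom_eq_finsum_of_isNilpotent (R := ℝ) a ha
  refine ⟨E.comp (SmoothGermAt.taylorExpansion m x₀), fun f hf => ?_⟩
  rw [← finsum_comp_equiv Finsupp.equivFunOnFinite, AlgHom.comp_apply, hE]
  refine finsum_congr fun n => ?_
  rw [SmoothGermAt.coeff_taylorExpansion rfl, n.prod_fintype _ fun i => pow_zero (a i)]
  rfl
end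

section
/- Fix an open set U ⊆ ℝ^n and q ∈ ℕ, let x ∈ U, let f be a C^∞ map from U to the Grassmann algebra λ_q, and let k ∈ ℕ. Then there exists an element p of A_x which is an ℝ-linear combination of products of at most k elements taken from the set consisting of the germs at x of the scalar coordinate functions y ↦ (y_i − x_i)·1 (i = 1, …, n) and the constant germs with value ι(e_j) (j = 1, …, q) (the empty product being 1), such that the germ of f at x minus p lies in m_x^{k+1}, the (k+1)-st power of the two-sided ideal m_x = {h ∈ A_x : ε(h(x)) = 0}. -/
set_option synthInstance.maxHeartbeats 1000000
set_option maxHeartbeats 1000000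

open Filter Topology

/-- The Grassmann algebra `λ_q = R[θ_1, …, θ_q]` over `ℝ`. -/
abbrev GrassmannAlg (q : ℕ) : Type := ExteriorAlgebra ℝ (Fin q → ℝ)

/-- `f : ℝ^n → λ_q` is `C^∞` on `U`.  Since `λ_q` is a finite-dimensional real vector space
(of dimension `2 ^ q`), smoothness with respect to any norm on `λ_q` (all of which are
equivalent) amounts to the existence of a finite decomposition `f = ∑ j, g j • b j` with
`C^∞` real-valued coefficient functions `g j` and constant vectors `b j ∈ λ_q`;
we take this as the definition. -/
def ContDiffOnG {n q : ℕ} (f : (Fin n → ℝ) → GrassmannAlg q) (U : Set (Fin n → ℝ)) : Prop :=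
  ∃ (k : ℕ) (g : Fin k → (Fin n → ℝ) → ℝ) (b : Fin k → GrassmannAlg q),
    (∀ j, ContDiffOn ℝ (⊤ : ℕ∞) (g j) U) ∧ ∀ y ∈ U, f y = ∑ j, g j y • b j

theorem ContDiffOnG.mul {n q : ℕ} {f g : (Fin n → ℝ) → GrassmannAlg q}
    {U V : Set (Fin n → ℝ)} (hf : ContDiffOnG f U) (hg : ContDiffOnG g V) :
    ContDiffOnG (f * g) (U ∩ V) := by
  obtain ⟨k₁, g₁, b₁, hg₁, hfd⟩ := hf
  obtain ⟨k₂, g₂, b₂, hg₂, hgd⟩ := hg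
  refine ⟨k₁ * k₂,
    fun p y => g₁ (finProdFinEquiv.symm p).1 y * g₂ (finProdFinEquiv.symm p).2 y,
    fun p => b₁ (finProdFinEquiv.symm p).1 * b₂ (finProdFinEquiv.symm p).2, ?_, ?_⟩
  · intro p
    exact ((hg₁ _).mono Set.inter_subset_left).mul ((hg₂ _).mono Set.inter_subset_right)
  · intro y hy
    have key : ∀ pr : Fin k₁ × Fin k₂,
        (g₁ pr.1 y • b₁ pr.1) * (g₂ pr.2 y • b₂ pr.2)
          = (g₁ pr.1 y * g₂ pr.2 y) • (b₁ pr.1 * b₂ pr.2) := by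
      intro pr
      rw [smul_mul_assoc, mul_smul_comm, smul_smul]
    calc (f * g) y = f y * g y := rfl
      _ = (∑ j, g₁ j y • b₁ j) * (∑ j, g₂ j y • b₂ j) := by rw [hfd y hy.1, hgd y hy.2]
      _ = ∑ j : Fin k₁, ∑ j' : Fin k₂, (g₁ j y • b₁ j) * (g₂ j' y • b₂ j') :=
        Finset.sum_mul_sum _ _ _ _
      _ = ∑ pr : Fin k₁ × Fin k₂, (g₁ pr.1 y • b₁ pr.1) * (g₂ pr.2 y • b₂ pr.2) :=
        (Fintype.sum_prod_type
          (fun pr : Fin k₁ × Fin k₂ => (g₁ pr.1 y • b₁ pr.1) * (g₂ pr.2 y • b₂ pr.2))).symm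
      _ = ∑ pr : Fin k₁ × Fin k₂, (g₁ pr.1 y * g₂ pr.2 y) • (b₁ pr.1 * b₂ pr.2) :=
        Finset.sum_congr rfl fun pr _ => key pr
      _ = ∑ p : Fin (k₁ * k₂), (g₁ (finProdFinEquiv.symm p).1 y * g₂ (finProdFinEquiv.symm p).2 y)
            • (b₁ (finProdFinEquiv.symm p).1 * b₂ (finProdFinEquiv.symm p).2) :=
        (Equiv.sum_comp finProdFinEquiv.symm fun pr =>
          (g₁ pr.1 y * g₂ pr.2 y) • (b₁ pr.1 * b₂ pr.2)).symm

theorem ContDiffOnG.add {n q : ℕ} {f g : (Fin n → ℝ) → GrassmannAlg q}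
    {U V : Set (Fin n → ℝ)} (hf : ContDiffOnG f U) (hg : ContDiffOnG g V) :
    ContDiffOnG (f + g) (U ∩ V) := by
  obtain ⟨k₁, g₁, b₁, hg₁, hfd⟩ := hf
  obtain ⟨k₂, g₂, b₂, hg₂, hgd⟩ := hg
  refine ⟨k₁ + k₂, Fin.append g₁ g₂, Fin.append b₁ b₂, ?_, ?_⟩
  · intro j
    refine Fin.addCases (fun i => ?_) (fun i => ?_) j
    · rw [Fin.append_left]
      exact (hg₁ i).mono Set.inter_subset_left
    · rw [Fin.append_right]
      exact (hg₂ i).mono Set.inter_subset_right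
  · intro y hy
    rw [Pi.add_apply, hfd y hy.1, hgd y hy.2, Fin.sum_univ_add]
    congr 1
    · exact Finset.sum_congr rfl fun i _ => by rw [Fin.append_left, Fin.append_left]
    · exact Finset.sum_congr rfl fun i _ => by rw [Fin.append_right, Fin.append_right]

theorem ContDiffOnG.const {n q : ℕ} (c : GrassmannAlg q) :
    ContDiffOnG (fun _ : Fin n → ℝ => c) Set.univ := by
  refine ⟨1, fun _ _ => 1, fun _ => c, fun _ => contDiffOn_const, fun y _ => ?_⟩
  simp

/-- `A_x`: the `ℝ`-algebra of germs at `x ∈ ℝ^n` of `C^∞` maps from open neighbourhoods of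
`x` to the Grassmann algebra `λ_q`; this is the stalk at `x` of the structure sheaf
`C^∞ ⊗ ⋀ (ℝ^q)*` of a Berezin–Kostant–Leites superdomain. -/
noncomputable def SmoothGermAtG (n q : ℕ) (x : Fin n → ℝ) :
    Subalgebra ℝ (Filter.Germ (𝓝 x) (GrassmannAlg q)) where
  carrier := {φ | ∃ f : (Fin n → ℝ) → GrassmannAlg q,
    (∃ U : Set (Fin n → ℝ), IsOpen U ∧ x ∈ U ∧ ContDiffOnG f U) ∧ φ = ↑f}
  mul_mem' := by
    rintro φ ψ ⟨f, ⟨U, hU, hxU, hf⟩, rfl⟩ ⟨g, ⟨V, hV, hxV, hg⟩, rfl⟩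
    exact ⟨f * g, ⟨U ∩ V, hU.inter hV, ⟨hxU, hxV⟩, hf.mul hg⟩,
      (Filter.Germ.coe_mul f g).symm ▸ rfl⟩
  add_mem' := by
    rintro φ ψ ⟨f, ⟨U, hU, hxU, hf⟩, rfl⟩ ⟨g, ⟨V, hV, hxV, hg⟩, rfl⟩
    exact ⟨f + g, ⟨U ∩ V, hU.inter hV, ⟨hxU, hxV⟩, hf.add hg⟩,
      (Filter.Germ.coe_add f g).symm ▸ rfl⟩
  algebraMap_mem' := by
    intro c
    refine ⟨fun _ => algebraMap ℝ (GrassmannAlg q) c,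
      ⟨Set.univ, isOpen_univ, trivial, ContDiffOnG.const _⟩, ?_⟩
    show c • (1 : Filter.Germ (𝓝 x) (GrassmannAlg q)) = _
    rw [show (1 : Filter.Germ (𝓝 x) (GrassmannAlg q))
        = ((fun _ => (1 : GrassmannAlg q)) : (Fin n → ℝ) → GrassmannAlg q) from rfl,
      ← Filter.Germ.coe_smul]
    exact congrArg _ (funext fun z => (Algebra.algebraMap_eq_smul_one c).symm)

/-- The two-sided ideal `m_x = {h ∈ A_x ∣ ε (h x) = 0}` of the algebra `A_x` of germs at `x`
of smooth `λ_q`-valued maps, as an `ℝ`-submodule of `A_x` (its powers, formed via the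
product of submodules of the algebra `A_x`, coincide with the powers of the two-sided
ideal `m_x`). -/
noncomputable def mGSub (n q : ℕ) (x : Fin n → ℝ) : Submodule ℝ (SmoothGermAtG n q x) where
  carrier := {h | ExteriorAlgebra.algebraMapInv
    (Filter.Germ.value (h : Filter.Germ (𝓝 x) (GrassmannAlg q))) = 0}
  zero_mem' := by
    show ExteriorAlgebra.algebraMapInv
      (Filter.Germ.value (0 : Filter.Germ (𝓝 x) (GrassmannAlg q))) = 0
    have h0 : Filter.Germ.value (0 : Filter.Germ (𝓝 x) (GrassmannAlg q)) = 0 := rfl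
    rw [h0, map_zero]
  add_mem' := by
    intro a b ha hb
    show ExteriorAlgebra.algebraMapInv
      (Filter.Germ.value ((a : Filter.Germ (𝓝 x) (GrassmannAlg q))
        + (b : Filter.Germ (𝓝 x) (GrassmannAlg q)))) = 0
    have : Filter.Germ.value ((a : Filter.Germ (𝓝 x) (GrassmannAlg q))
        + (b : Filter.Germ (𝓝 x) (GrassmannAlg q)))
        = Filter.Germ.value (a : Filter.Germ (𝓝 x) (GrassmannAlg q))
          + Filter.Germ.value (b : Filter.Germ (𝓝 x) (GrassmannAlg q)) :=
      map_add Filter.Germ.valueAddHom _ _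
    rw [this, map_add, ha, hb, add_zero]
  smul_mem' := by
    intro r h hh
    show ExteriorAlgebra.algebraMapInv
      (Filter.Germ.value (r • (h : Filter.Germ (𝓝 x) (GrassmannAlg q)))) = 0
    have : Filter.Germ.value (r • (h : Filter.Germ (𝓝 x) (GrassmannAlg q)))
        = r • Filter.Germ.value (h : Filter.Germ (𝓝 x) (GrassmannAlg q)) :=
      map_smul (Filter.Germ.valueₗ (𝕜 := ℝ)) r _
    rw [this, map_smul, hh, smul_zero]

/-- The germ at `x` of the scalar coordinate function `y ↦ (y i - x i) · 1`, as an element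
of `A_x`. -/
noncomputable def evenCoordGermG (n q : ℕ) (x : Fin n → ℝ) (i : Fin n) :
    SmoothGermAtG n q x :=
  ⟨(↑(fun y : Fin n → ℝ => algebraMap ℝ (GrassmannAlg q) (y i - x i)) :
      Filter.Germ (𝓝 x) (GrassmannAlg q)),
    ⟨fun y => algebraMap ℝ (GrassmannAlg q) (y i - x i),
      ⟨Set.univ, isOpen_univ, trivial,
        ⟨1, fun _ y => y i - x i, fun _ => 1,
          fun _ => ((ContinuousLinearMap.proj (R := ℝ) (φ := fun _ : Fin n => ℝ) i).contDiff.sub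
            contDiff_const).contDiffOn,
          fun y _ => by simp [Algebra.algebraMap_eq_smul_one]⟩⟩, rfl⟩⟩

/-- The constant germ at `x` with value the odd generator `θ_j = ι (e j)`, as an element
of `A_x`. -/
noncomputable def oddCoordGermG (n q : ℕ) (x : Fin n → ℝ) (j : Fin q) :
    SmoothGermAtG n q x :=
  ⟨(↑(fun _ : Fin n → ℝ => ExteriorAlgebra.ι ℝ (Pi.single j (1 : ℝ) : Fin q → ℝ)) :
      Filter.Germ (𝓝 x) (GrassmannAlg q)),
    ⟨fun _ => ExteriorAlgebra.ι ℝ (Pi.single j (1 : ℝ) : Fin q → ℝ),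
      ⟨Set.univ, isOpen_univ, trivial, ContDiffOnG.const _⟩, rfl⟩⟩

/-!
Let `S` be the span of the coordinate germs. Hadamard's lemma writes a smooth germ as its value
plus `∑ i, (y i - x i) • h i` with smooth `h i`, and the value, an element of `λ_q`, is a polynomial
in the odd generators; hence `A_x = ℝ + S A_x`. Iterating gives
`A_x = (ℝ + S) ^ k + S ^ (k + 1) A_x`, whose first summand consists of polynomials of degree at
most `k`. The second lies in `m_x ^ (k + 1)` because `S ⊆ m_x` and `m_x` is a right ideal.
-/

section ParametricIntegral

open MeasureTheory Set
open scoped Interval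

variable {E H : Type*} {a b : ℝ} {u : Set E}

theorem exists_eventually_norm_le_of_continuousOn_prod [TopologicalSpace E] {X : Type*}
    [TopologicalSpace X] [SeminormedAddCommGroup H] {K : Set X} {F : E × X → H} {y : E}
    (hK : IsCompact K) (hF : ContinuousOn F (u ×ˢ K)) (hy : y ∈ u) :
    ∃ C, ∀ᶠ z in 𝓝[u] y, ∀ t ∈ K, ‖F (z, t)‖ ≤ C := by
  have hFy : ContinuousOn (fun t => F (y, t)) K :=
    hF.comp (by fun_prop) fun t ht => mk_mem_prod hy ht
  obtain ⟨C, hC⟩ := hK.exists_bound_of_continuousOn hFy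
  have near : ∀ t ∈ K, ∀ᶠ p in 𝓝 (y, t), p.1 ∈ u → p.2 ∈ K → ‖F (p.1, p.2)‖ ≤ C + 1 := by
    intro t ht
    have hlt : ‖F (y, t)‖ < C + 1 := (hC t ht).trans_lt (lt_add_one C)
    have := (hF (y, t) ⟨hy, ht⟩).norm.eventually_lt_const hlt
    filter_upwards [eventually_nhdsWithin_iff.1 this] with p hp hpu hpK
    exact (hp ⟨hpu, hpK⟩).le
  refine ⟨C + 1, eventually_nhdsWithin_iff.2 ?_⟩
  filter_upwards [hK.eventually_forall_of_forall_eventually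
    (P := fun z t => z ∈ u → t ∈ K → ‖F (z, t)‖ ≤ C + 1) near] with z hz hzu t ht
  exact hz t ht hzu ht

variable [NormedAddCommGroup H]

theorem intervalIntegrable_of_continuousOn_prod [TopologicalSpace E] {F : E × ℝ → H} {y : E}
    (hF : ContinuousOn F (u ×ˢ [[a, b]])) (hy : y ∈ u) :
    IntervalIntegrable (fun t => F (y, t)) volume a b :=
  (hF.comp (by fun_prop) fun _ ht => mk_mem_prod hy ht).intervalIntegrable

theorem continuousOn_intervalIntegral_param [NormedSpace ℝ H] [TopologicalSpace E]
    [FirstCountableTopology E] {F : E × ℝ → H} (hF : ContinuousOn F (u ×ˢ [[a, b]])) :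
    ContinuousOn (fun y => ∫ t in a..b, F (y, t)) u := by
  intro y hy
  obtain ⟨C, hC⟩ := exists_eventually_norm_le_of_continuousOn_prod isCompact_uIcc hF hy
  refine intervalIntegral.continuousWithinAt_of_dominated_interval (bound := fun _ => C)
    ?_ ?_ intervalIntegrable_const ?_
  · filter_upwards [self_mem_nhdsWithin] with z hz
    exact (intervalIntegrable_of_continuousOn_prod hF hz).aestronglyMeasurable_restrict_uIoc
  · filter_upwards [hC] with z hz
    exact .of_forall fun t ht => hz t (uIoc_subset_uIcc ht)
  · refine .of_forall fun t ht => ?_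
    exact hF.comp (f := fun z => (z, t)) (by fun_prop)
      (fun z hz => mk_mem_prod hz (uIoc_subset_uIcc ht)) y hy

variable [NormedAddCommGroup E] [NormedSpace ℝ E] [NormedSpace ℝ H]

theorem hasFDerivAt_intervalIntegral_param {F : E × ℝ → H} {F' : E × ℝ → E →L[ℝ] H}
    (hu : IsOpen u) (hF : ContinuousOn F (u ×ˢ [[a, b]])) (hF' : ContinuousOn F' (u ×ˢ [[a, b]]))
    (hderiv : ∀ y ∈ u, ∀ t ∈ [[a, b]], HasFDerivAt (fun z => F (z, t)) (F' (y, t)) y)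
    {y : E} (hy : y ∈ u) :
    HasFDerivAt (fun z => ∫ t in a..b, F (z, t)) (∫ t in a..b, F' (y, t)) y := by
  obtain ⟨C, hC⟩ := exists_eventually_norm_le_of_continuousOn_prod isCompact_uIcc hF' hy
  rw [hu.nhdsWithin_eq hy] at hC
  refine intervalIntegral.hasFDerivAt_integral_of_dominated_of_fderiv_le
    (F := fun z t => F (z, t)) (F' := fun z t => F' (z, t)) (bound := fun _ => C)
    (inter_mem (hu.mem_nhds hy) hC) ?_ (intervalIntegrable_of_continuousOn_prod hF hy)
    (intervalIntegrable_of_continuousOn_prod hF' hy).aestronglyMeasurable_restrict_uIoc ?_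
    intervalIntegrable_const ?_
  · filter_upwards [hu.mem_nhds hy] with z hz
    exact (intervalIntegrable_of_continuousOn_prod hF hz).aestronglyMeasurable_restrict_uIoc
  · exact .of_forall fun t ht z hz => hz.2 t (uIoc_subset_uIcc ht)
  · exact .of_forall fun t ht z hz => hderiv z hz.1 t (uIoc_subset_uIcc ht)

theorem hasFTaylorSeriesUpToOn_intervalIntegral_param [CompleteSpace H] {n : WithTop ℕ∞}
    {F : E × ℝ → H} {p : E × ℝ → FormalMultilinearSeries ℝ E H} (hu : IsOpen u)
    (hp : ∀ t ∈ [[a, b]], HasFTaylorSeriesUpToOn n (fun y => F (y, t)) (fun y => p (y, t)) u)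
    (hcont : ∀ m : ℕ, m ≤ n → ContinuousOn (fun z => p z m) (u ×ˢ [[a, b]])) :
    HasFTaylorSeriesUpToOn n (fun y => ∫ t in a..b, F (y, t))
      (fun y m => ∫ t in a..b, p (y, t) m) u := by
  refine ⟨fun y hy => ?_, fun m hm y hy => ?_,
    fun m hm => continuousOn_intervalIntegral_param (hcont m hm)⟩
  · let curry₀ := (continuousMultilinearCurryFin0 ℝ E H).toContinuousLinearEquiv
    calc curry₀ (∫ t in a..b, p (y, t) 0)
        = ∫ t in a..b, curry₀ (p (y, t) 0) :=
          (curry₀.toContinuousLinearMap.intervalIntegral_comp_comm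
            (intervalIntegrable_of_continuousOn_prod (hcont 0 bot_le) hy)).symm
      _ = ∫ t in a..b, F (y, t) :=
          intervalIntegral.integral_congr fun t ht => (hp t ht).zero_eq y hy
  · have hcont' := hcont (m + 1) (ENat.add_one_natCast_le_withTop_of_lt hm)
    let curry : (E [×(m + 1)]→L[ℝ] H) →L[ℝ] E →L[ℝ] E [×m]→L[ℝ] H :=
      (continuousMultilinearCurryLeftEquiv ℝ (fun _ : Fin (m + 1) => E) H).toContinuousLinearEquiv
        |>.toContinuousLinearMap
    have hcurry := ContinuousLinearMap.intervalIntegral_comp_comm (𝕜 := ℝ)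
      (F := E →L[ℝ] E [×m]→L[ℝ] H) curry (intervalIntegrable_of_continuousOn_prod hcont' hy)
    change HasFDerivWithinAt _ (curry (∫ t in a..b, p (y, t) (m + 1))) u y
    rw [← hcurry]
    exact (hasFDerivAt_intervalIntegral_param hu (hcont m hm.le)
      (F' := fun z => curry (p z (m + 1))) (curry.continuous.comp_continuousOn hcont')
      (fun z hz t ht => ((hp t ht).fderivWithin m hm z hz).hasFDerivAt (hu.mem_nhds hz))
      hy).hasFDerivWithinAt

theorem contDiffOn_intervalIntegral_param [CompleteSpace H] {n : ℕ∞} {F : E × ℝ → H}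
    {W : Set (E × ℝ)} (hu : IsOpen u) (hW : IsOpen W) (huW : u ×ˢ [[a, b]] ⊆ W)
    (hF : ContDiffOn ℝ n F W) : ContDiffOn ℝ n (fun y => ∫ t in a..b, F (y, t)) u := by
  -- Integrating the whole Taylor series avoids an induction on `n`, where `H` would be replaced
  -- by `E →L[ℝ] H` in a possibly different universe.
  let p := ftaylorSeriesWithin ℝ F W
  have hp : HasFTaylorSeriesUpToOn n F p W := hF.ftaylorSeriesWithin hW.uniqueDiffOn
  let inl : E →L[ℝ] E × ℝ := ContinuousLinearMap.inl ℝ E ℝ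
  have slice (t : ℝ) (ht : t ∈ [[a, b]]) : HasFTaylorSeriesUpToOn n (fun y => F (y, t))
      (fun y m => (p (y, t) m).compContinuousLinearMap fun _ => inl) u :=
    (hp.comp_continuousAffineMap
      ((ContinuousAffineMap.id ℝ E).prod (.const ℝ E t))).mono fun y hy => huW (mk_mem_prod hy ht)
  exact (hasFTaylorSeriesUpToOn_intervalIntegral_param (F := F)
    (p := fun z m => (p z m).compContinuousLinearMap fun _ => inl) hu slice fun m hm =>
      (ContinuousMultilinearMap.compContinuousLinearMapL fun _ => inl).continuous.comp_continuousOn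
        ((hp.cont m hm).mono huW)).contDiffOn

theorem exists_contDiffOn_eq_add_apply_sub [CompleteSpace H] {n : ℕ∞} {g : E → H} {x : E}
    (hu : IsOpen u) (hux : StarConvex ℝ x u) (hg : ContDiffOn ℝ (n + 1) g u) :
    ∃ L : E → E →L[ℝ] H, ContDiffOn ℝ n L u ∧ ∀ y ∈ u, g y = g x + L y (y - x) := by
  let W : Set (E × ℝ) := {z | x + z.2 • (z.1 - x) ∈ u}
  have hW : IsOpen W := hu.preimage (by fun_prop)
  have huW : u ×ˢ [[(0 : ℝ), 1]] ⊆ W := by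
    rw [uIcc_of_le zero_le_one]
    exact fun z hz => hux.add_smul_sub_mem hz.1 hz.2.1 hz.2.2
  have hF : ContDiffOn ℝ n (fun z : E × ℝ => fderiv ℝ g (x + z.2 • (z.1 - x))) W :=
    (hg.fderiv_of_isOpen hu le_rfl).comp (by fun_prop) fun _ hz => hz
  refine ⟨fun y => ∫ t in (0 : ℝ)..1, fderiv ℝ g (x + t • (y - x)),
    contDiffOn_intervalIntegral_param hu hW huW hF, fun y hy => ?_⟩
  have taylor := map_add_eq_sum_add_integral_iteratedFDeriv (f := g) (x := x) (y := y - x)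
    (n := 0) fun t ht => (hg.of_le (by simp)).contDiffAt
      (hu.mem_nhds (hux.add_smul_sub_mem hy ht.1 ht.2))
  rw [ContinuousLinearMap.intervalIntegral_apply
    (intervalIntegrable_of_continuousOn_prod (hF.continuousOn.mono huW) hy)]
  simpa [iteratedFDeriv_one_apply] using taylor

end ParametricIntegral

section Generation

variable {R A : Type*} [CommSemiring R] [Semiring A] [Algebra R A]

theorem one_sup_pow_sup_pow_mul_top_eq_top {M : Submodule R A} (hM : 1 ⊔ M * ⊤ = ⊤) (k : ℕ) :
    (1 ⊔ M) ^ k ⊔ M ^ (k + 1) * ⊤ = ⊤ := by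
  induction k with
  | zero => simpa using hM
  | succ k ih =>
    have split : M ^ (k + 1) * ⊤ = M ^ (k + 1) ⊔ M ^ (k + 2) * ⊤ := by
      rw [pow_succ M (k + 1), mul_assoc]
      nth_rw 1 [← hM]
      rw [Submodule.mul_sup, mul_one]
    have low : (1 ⊔ M) ^ k ⊔ M ^ (k + 1) ≤ (1 ⊔ M) ^ (k + 1) :=
      sup_le (pow_le_pow_right₀ le_sup_left k.le_succ) (pow_le_pow_left' le_sup_right _)
    rw [split, ← sup_assoc] at ih
    exact eq_top_mono (sup_le_sup_right low _) ih

open scoped Pointwise in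
theorem insert_one_pow_subset {N : Type*} [Monoid N] (s : Set N) (k : ℕ) :
    insert 1 s ^ k ⊆ {z | ∃ l : List N, l.length ≤ k ∧ (∀ a ∈ l, a ∈ s) ∧ z = l.prod} := by
  induction k with
  | zero => exact Set.one_subset.2 ⟨[], le_rfl, by simp, List.prod_nil.symm⟩
  | succ k ih =>
    rw [pow_succ']
    rintro _ ⟨a, ha, z, hz, rfl⟩
    obtain ⟨l, hlen, hl, rfl⟩ := ih hz
    obtain rfl | ha := ha
    · exact ⟨l, hlen.trans k.le_succ, hl, one_mul _⟩
    · exact ⟨a :: l, Nat.succ_le_succ hlen, List.forall_mem_cons.2 ⟨ha, hl⟩, List.prod_cons.symm⟩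

theorem one_sup_span_pow_le (s : Set A) (k : ℕ) :
    (1 ⊔ Submodule.span R s) ^ k ≤
      Submodule.span R {z | ∃ l : List A, l.length ≤ k ∧ (∀ a ∈ l, a ∈ s) ∧ z = l.prod} := by
  rw [Submodule.one_eq_span, ← Submodule.span_insert, Submodule.span_pow]
  exact Submodule.span_mono (insert_one_pow_subset s k)

theorem toSubmodule_adjoin_le_one_sup_span_mul_top (s : Set A) :
    (Algebra.adjoin R s).toSubmodule ≤ 1 ⊔ Submodule.span R s * ⊤ := by
  rw [Algebra.adjoin_eq_span, Submodule.span_le]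
  intro z hz
  induction hz using Submonoid.closure_induction_left with
  | one => exact Submodule.mem_sup_left (Submodule.one_le.1 le_rfl)
  | mul_left a ha z _ _ =>
    exact Submodule.mem_sup_right
      (Submodule.mul_mem_mul (Submodule.subset_span ha) Submodule.mem_top)

theorem pow_succ_mul_top_le {M I : Submodule R A} (hMI : M ≤ I) (hI : I * ⊤ ≤ I) (k : ℕ) :
    M ^ (k + 1) * ⊤ ≤ I ^ (k + 1) :=
  calc M ^ (k + 1) * ⊤ ≤ I ^ (k + 1) * ⊤ := mul_le_mul_left (pow_le_pow_left' hMI _) _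
    _ = I ^ k * (I * ⊤) := by rw [pow_succ, mul_assoc]
    _ ≤ I ^ (k + 1) := (mul_le_mul_right hI _).trans_eq (pow_succ I k).symm

end Generation

theorem adjoin_image_ι_eq_top {R M : Type*} [CommRing R] [AddCommGroup M] [Module R M] {s : Set M}
    (hs : Submodule.span R s = ⊤) : Algebra.adjoin R (ExteriorAlgebra.ι R '' s) = ⊤ := by
  rw [← Algebra.adjoin_span, ← Submodule.map_span, hs, Submodule.map_top]
  exact CliffordAlgebra.adjoin_range_ι

section Germs

variable {n q : ℕ} {x : Fin n → ℝ}

theorem ContDiffOnG.mono {f : (Fin n → ℝ) → GrassmannAlg q} {U V : Set (Fin n → ℝ)}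
    (hf : ContDiffOnG f U) (hVU : V ⊆ U) : ContDiffOnG f V := by
  obtain ⟨k, g, b, hg, hfd⟩ := hf
  exact ⟨k, g, b, fun j => (hg j).mono hVU, fun y hy => hfd y (hVU hy)⟩

theorem ContDiffOnG.exists_eq_add_sum_smul {f : (Fin n → ℝ) → GrassmannAlg q}
    {U : Set (Fin n → ℝ)} (hf : ContDiffOnG f U) (hU : IsOpen U) (hUx : StarConvex ℝ x U) :
    ∃ h : Fin n → (Fin n → ℝ) → GrassmannAlg q, (∀ i, ContDiffOnG (h i) U) ∧
      ∀ y ∈ U, f y = f x + ∑ i, (y i - x i) • h i y := by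
  obtain ⟨k, g, b, hg, hfd⟩ := hf
  choose L hL hgL using fun j => exists_contDiffOn_eq_add_apply_sub hU hUx (n := ⊤) (hg j)
  let h (i : Fin n) (y : Fin n → ℝ) : GrassmannAlg q := ∑ j, L j y (Pi.single i 1) • b j
  refine ⟨h, fun i => ⟨k, fun j y => L j y (Pi.single i 1), b,
    fun j => (hL j).clm_apply contDiffOn_const, fun _ _ => rfl⟩, fun y hy => ?_⟩
  have apply_sub (j : Fin k) : L j y (y - x) = ∑ i, (y i - x i) * L j y (Pi.single i 1) := by
    nth_rw 1 [pi_eq_sum_univ' (y - x)]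
    simp only [map_sum, map_smul, Pi.sub_apply, smul_eq_mul]
  calc f y = ∑ j, (g j x + ∑ i, (y i - x i) * L j y (Pi.single i 1)) • b j := by
        rw [hfd y hy]
        exact Finset.sum_congr rfl fun j _ => by rw [hgL j y hy, apply_sub]
    _ = f x + ∑ j, ∑ i, (y i - x i) • L j y (Pi.single i 1) • b j := by
        simp only [hfd x (hUx.mem ⟨y, hy⟩), add_smul, Finset.sum_smul, Finset.sum_add_distrib,
          mul_smul]
    _ = f x + ∑ i, (y i - x i) • h i y := by
        rw [Finset.sum_comm]
        simp only [h, Finset.smul_sum]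

/-- The coordinate germs at `x`, both even and odd, i.e. the variables of the polynomials
approximating a germ. -/
def coordGermsG (n q : ℕ) (x : Fin n → ℝ) : Set (SmoothGermAtG n q x) :=
  Set.range (evenCoordGermG n q x) ∪ Set.range (oddCoordGermG n q x)

/-- The inclusion `λ_q → A_x` of the constant germs. -/
noncomputable def constGermG (n q : ℕ) (x : Fin n → ℝ) :
    GrassmannAlg q →ₐ[ℝ] SmoothGermAtG n q x where
  toFun c := ⟨(↑(fun _ : Fin n → ℝ => c) : Filter.Germ (𝓝 x) (GrassmannAlg q)),
    fun _ => c, ⟨Set.univ, isOpen_univ, trivial, ContDiffOnG.const _⟩, rfl⟩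
  map_one' := rfl
  map_mul' _ _ := rfl
  map_zero' := rfl
  map_add' _ _ := rfl
  commutes' r := Subtype.ext <|
    congrArg (fun f : (Fin n → ℝ) → GrassmannAlg q => (f : Filter.Germ (𝓝 x) (GrassmannAlg q)))
      (funext fun _ => Algebra.algebraMap_eq_smul_one r)

theorem range_constGermG :
    (constGermG n q x).range = Algebra.adjoin ℝ (Set.range (oddCoordGermG n q x)) := by
  have span_single : Submodule.span ℝ (Set.range fun j : Fin q =>
      (Pi.single j 1 : Fin q → ℝ)) = ⊤ := by
    simpa only [← Pi.basisFun_apply ℝ] using (Pi.basisFun ℝ (Fin q)).span_eq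
  rw [← Algebra.map_top, ← adjoin_image_ι_eq_top span_single, AlgHom.map_adjoin,
    ← Set.range_comp, ← Set.range_comp]
  rfl

theorem exists_eq_constGermG_add_sum_evenCoordGermG_mul (φ : SmoothGermAtG n q x) :
    ∃ (c : GrassmannAlg q) (ψ : Fin n → SmoothGermAtG n q x),
      φ = constGermG n q x c + ∑ i, evenCoordGermG n q x i * ψ i := by
  obtain ⟨_, f, ⟨U, hU, hx, hf⟩, rfl⟩ := φ
  obtain ⟨r, hr, hrU⟩ := Metric.isOpen_iff.1 hU x hx
  have hxr : x ∈ Metric.ball x r := Metric.mem_ball_self hr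
  obtain ⟨h, hh, hfh⟩ := (hf.mono hrU).exists_eq_add_sum_smul Metric.isOpen_ball
    ((convex_ball x r).starConvex hxr)
  refine ⟨f x, fun i => ⟨_, h i, ⟨_, Metric.isOpen_ball, hxr, hh i⟩, rfl⟩, Subtype.ext ?_⟩
  have eventually_eq : f =ᶠ[𝓝 x] (fun _ => f x) +
      ∑ i, (fun y : Fin n → ℝ => algebraMap ℝ (GrassmannAlg q) (y i - x i)) * h i := by
    filter_upwards [Metric.isOpen_ball.mem_nhds hxr] with y hy
    simp only [hfh y hy, Pi.add_apply, Finset.sum_apply, Pi.mul_apply, Algebra.smul_def]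
  refine (Filter.Germ.coe_eq.2 eventually_eq).trans ?_
  rw [Filter.Germ.coe_add, Germ.coe_sum, AddMemClass.coe_add,
    AddSubmonoidClass.coe_finsetSum]
  rfl

theorem one_sup_span_coordGermsG_mul_top :
    (1 ⊔ Submodule.span ℝ (coordGermsG n q x) * ⊤ : Submodule ℝ (SmoothGermAtG n q x)) = ⊤ := by
  refine eq_top_iff.2 fun φ _ => ?_
  obtain ⟨c, ψ, rfl⟩ := exists_eq_constGermG_add_sum_evenCoordGermG_mul φ
  refine add_mem ?_ (Submodule.mem_sup_right (sum_mem fun i _ => ?_))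
  · have hc : constGermG n q x c ∈ Algebra.adjoin ℝ (coordGermsG n q x) :=
      Algebra.adjoin_mono Set.subset_union_right (range_constGermG.le ⟨c, rfl⟩)
    exact toSubmodule_adjoin_le_one_sup_span_mul_top _ hc
  · exact Submodule.mul_mem_mul (Submodule.subset_span (.inl ⟨i, rfl⟩)) Submodule.mem_top

theorem coordGermsG_subset_mGSub : coordGermsG n q x ⊆ mGSub n q x := by
  rintro _ (⟨i, rfl⟩ | ⟨j, rfl⟩)
  · change ExteriorAlgebra.algebraMapInv (algebraMap ℝ (GrassmannAlg q) (x i - x i)) = 0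
    rw [sub_self, map_zero, map_zero]
  · change ExteriorAlgebra.algebraMapInv (ExteriorAlgebra.ι ℝ (Pi.single j 1 : Fin q → ℝ)) = 0
    simp [ExteriorAlgebra.algebraMapInv]

theorem mGSub_mul_top_le : mGSub n q x * ⊤ ≤ mGSub n q x := by
  refine Submodule.mul_le.2 ?_
  rintro ⟨_, f, hf, rfl⟩ hfx ⟨_, g, hg, rfl⟩ -
  replace hfx : ExteriorAlgebra.algebraMapInv (f x) = 0 := hfx
  change ExteriorAlgebra.algebraMapInv (f x * g x) = 0
  rw [map_mul, hfx, zero_mul]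

theorem span_coordGermsG_pow_succ_mul_top_le (k : ℕ) :
    Submodule.span ℝ (coordGermsG n q x) ^ (k + 1) * ⊤ ≤ mGSub n q x ^ (k + 1) :=
  pow_succ_mul_top_le (Submodule.span_le.2 coordGermsG_subset_mGSub) mGSub_mul_top_le k

end Germs

/-- **(Lemma 3.14 (ii), specialized to `ℝ`.)** Let `U ⊆ ℝ^n` be open, `x ∈ U`, `f : U → λ_q`
a `C^∞` map and `k ∈ ℕ`. Then there is an element `p` of `A_x` which is an `ℝ`-linear
combination of products of at most `k` elements taken from the germs of the scalar
coordinate functions `y ↦ (y i - x i) · 1` and the constant germs with value `ι (e j)`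
(the empty product being `1`), such that the germ of `f` at `x` minus `p` lies in
`m_x ^ (k + 1)`, the `(k+1)`-st power of the two-sided ideal
`m_x = {h ∈ A_x ∣ ε (h x) = 0}`. -/
theorem exists_poly_germ_sub_mem_mG_pow (n q : ℕ) (U : Set (Fin n → ℝ)) (hU : IsOpen U)
    (x : Fin n → ℝ) (hx : x ∈ U) (f : (Fin n → ℝ) → GrassmannAlg q)
    (hf : ContDiffOnG f U) (k : ℕ) :
    ∃ p ∈ Submodule.span ℝ {z : SmoothGermAtG n q x |
        ∃ l : List (SmoothGermAtG n q x), l.length ≤ k ∧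
          (∀ s ∈ l,
            s ∈ Set.range (evenCoordGermG n q x) ∪ Set.range (oddCoordGermG n q x)) ∧
          z = l.prod},
      (⟨(↑f : Filter.Germ (𝓝 x) (GrassmannAlg q)), f, ⟨U, hU, hx, hf⟩, rfl⟩ :
          SmoothGermAtG n q x) - p ∈
        (mGSub n q x ^ (k + 1) : Submodule ℝ (SmoothGermAtG n q x)) := by
  obtain ⟨p, hp, r, hr, hpr⟩ := Submodule.mem_sup.1 <|
    (one_sup_pow_sup_pow_mul_top_eq_top one_sup_span_coordGermsG_mul_top k).ge
      (Submodule.mem_top (x := ⟨↑f, f, ⟨U, hU, hx, hf⟩, rfl⟩))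
  refine ⟨p, one_sup_span_pow_le (coordGermsG n q x) k hp, ?_⟩
  rw [← hpr, add_sub_cancel_left]
  exact span_coordGermsG_pow_succ_mul_top_le k hr
end
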